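/- With the signed-permutation setup (G ≤ W_g containing δ, acting transitively on {1,…,g}×{+1,−1}, with stabilizer H of (1,+1), positive set S, and primitivity condition that every τ ∈ G with Sτ = S lies in H), and with U ≤ ℤ^g the subgroup generated by the indicator vectors 1_{T(σ)} for σ ∈ G: if g = 3, then U = ℤ³. -/

import Mathlib

/-- The signed permutation `δ`, sending `(i, ε)` to `(i, −ε)` (complex conjugation). -/
def signFlip (g : ℕ) : Equiv.Perm (Fin g × Bool) :=
  Equiv.prodCongr (Equiv.refl (Fin g))
    ⟨fun b => !b, fun b => !b, fun b => Bool.not_not b, fun b => Bool.not_not b⟩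

/-- The subgroup `U ≤ ℤ^g` generated by the indicator vectors `1_{T(σ)}`, `σ ∈ G`, where
`T(σ) = {i : σ(j,+1) = (i,−1) for some j}`. -/
def imageLattice (g : ℕ) (G : Subgroup (Equiv.Perm (Fin g × Bool))) :
    AddSubgroup (Fin g → ℤ) :=
  AddSubgroup.closure
    {v | ∃ σ ∈ G, v = fun i => if ∃ j, σ (j, true) = (i, false) then 1 else 0}

/-!
The inverse of `ρ ∈ G` contributes to `U` the indicator vector of `{i | ρ(i, −1) is positive}`.
By transitivity, primitivity at one base point forces these sets to separate any two indices. If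
such a set contains `i` but not `j`, then, there being only three indices, it is `{i}` or the
complement of `{j}`. As `δ` puts the all-ones vector in `U`, one of any two distinct standard basis
vectors lies in `U`. So at most one basis vector could be missing from `U`, and that one is the
all-ones vector minus the others.
-/

section Separation

variable {M X : Type*} [Group M] [MulAction M X] {G : Subgroup M} {P : Set X}

/-- The set of elements of `G` moving `x` into `P`. For `x = (1,+1)` and `P` the positive elements
this is the set `S` of the primitivity condition. -/
def transporter (G : Subgroup M) (x : X) (P : Set X) : Set M :=
  {σ | σ ∈ G ∧ σ • x ∈ P}

theorem transporter_smul {τ : M} (hτ : τ ∈ G) (x : X) :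
    transporter G (τ • x) P = (· * τ) ⁻¹' transporter G x P := by
  ext σ
  simp only [transporter, Set.mem_preimage, Set.mem_ofPred_eq, mul_smul,
    G.mul_mem_cancel_right hτ]

theorem transporter_injective {x : X} (htrans : ∀ p, ∃ σ ∈ G, σ • p = x)
    (hprim : ∀ τ ∈ G, (· * τ) '' transporter G x P = transporter G x P → τ • x = x) :
    Function.Injective (transporter G · P) := by
  intro p q (hpq : transporter G p P = transporter G q P)
  obtain ⟨a, ha, hap⟩ := htrans p
  obtain ⟨b, hb, hbq⟩ := htrans q
  have hτ : b * a⁻¹ ∈ G := G.mul_mem hb (G.inv_mem ha)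
  have hτx : (b * a⁻¹)⁻¹ • x = a • q := by simp [← hbq, mul_smul]
  have hinv : (· * (b * a⁻¹)) '' transporter G x P = transporter G x P := by
    rw [Set.image_mul_right, ← transporter_smul (G.inv_mem hτ), hτx, transporter_smul ha, ← hpq,
      ← transporter_smul ha, hap]
  have hbp : b • p = x := by
    simpa [← hap, mul_smul] using hprim _ hτ hinv
  exact smul_left_cancel b (hbp.trans hbq.symm)

theorem exists_smul_mem_iff_smul_notMem {x p q : X} (htrans : ∀ p, ∃ σ ∈ G, σ • p = x)
    (hprim : ∀ τ ∈ G, (· * τ) '' transporter G x P = transporter G x P → τ • x = x)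
    (hpq : p ≠ q) : ∃ σ ∈ G, (σ • p ∈ P ↔ σ • q ∉ P) := by
  contrapose! hpq
  refine transporter_injective htrans hprim (Set.ext fun σ => and_congr_right fun hσ => ?_)
  have := hpq σ hσ
  tauto

end Separation

section Indicator

variable {ι R : Type*}

theorem eq_singleton_or_compl_eq_singleton (hι : Nat.card ι = 3) {s : Set ι} {i j : ι}
    (hi : i ∈ s) (hj : j ∉ s) : s = {i} ∨ sᶜ = {j} := by
  have : Finite ι := Nat.finite_of_card_ne_zero (by simp [hι])
  have hcard : s.ncard + sᶜ.ncard = 3 := (Set.ncard_add_ncard_compl s).trans hι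
  have hs : 0 < s.ncard := (Set.ncard_pos s.toFinite).2 ⟨i, hi⟩
  have hs' : 0 < sᶜ.ncard := (Set.ncard_pos sᶜ.toFinite).2 ⟨j, hj⟩
  obtain h | h : s.ncard = 1 ∨ sᶜ.ncard = 1 := by omega
  · obtain ⟨k, rfl⟩ := Set.ncard_eq_one.1 h
    exact .inl (congrArg singleton hi.symm)
  · obtain ⟨k, hk⟩ := Set.ncard_eq_one.1 h
    have hjk : j = k := by simpa [hk] using Set.mem_compl hj
    exact .inr (hjk ▸ hk)

section SingleOne

variable [DecidableEq ι] [AddCommGroupWithOne R] {U : AddSubgroup (ι → R)}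

theorem single_one_mem_or_single_one_mem (hι : Nat.card ι = 3) (hone : 1 ∈ U) {s : Set ι}
    (hs : s.indicator 1 ∈ U) {i j : ι} (hi : i ∈ s) (hj : j ∉ s) :
    Pi.single i 1 ∈ U ∨ Pi.single j 1 ∈ U := by
  obtain rfl | hcompl := eq_singleton_or_compl_eq_singleton hι hi hj
  · left
    simpa only [Set.indicator_singleton, Pi.one_apply] using hs
  · right
    have hmem : sᶜ.indicator 1 ∈ U := Set.indicator_compl s (1 : ι → R) ▸ U.sub_mem hone hs
    simpa only [hcompl, Set.indicator_singleton, Pi.one_apply] using hmem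

theorem single_one_mem_of_forall_ne [Finite ι] (hone : 1 ∈ U) {i : ι}
    (h : ∀ j ≠ i, Pi.single j 1 ∈ U) : Pi.single i 1 ∈ U := by
  have := Fintype.ofFinite ι
  have hsum : Pi.single i 1 + ∑ j ∈ Finset.univ.erase i, Pi.single j 1 = (1 : ι → R) :=
    (Finset.add_sum_erase _ (fun j => Pi.single j 1) (Finset.mem_univ i)).trans
      (Finset.univ_sum_single 1)
  rw [eq_sub_of_add_eq hsum]
  exact U.sub_mem hone (U.sum_mem fun j hj => h j (Finset.ne_of_mem_erase hj))

end SingleOne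

theorem eq_top_of_forall_single_one_mem [Finite ι] [DecidableEq ι] {U : AddSubgroup (ι → ℤ)}
    (h : ∀ i, Pi.single i 1 ∈ U) : U = ⊤ := by
  refine (AddSubgroup.eq_top_iff' U).2 fun v => AddSubgroup.pi_mem_of_single_mem v fun i => ?_
  simpa [← Pi.single_smul] using U.zsmul_mem (h i) (v i)

theorem eq_top_of_forall_exists_separating_indicator (hι : Nat.card ι = 3)
    {U : AddSubgroup (ι → ℤ)} (hone : 1 ∈ U)
    (hsep : ∀ i j, i ≠ j → ∃ s : Set ι, s.indicator 1 ∈ U ∧ (i ∈ s ↔ j ∉ s)) : U = ⊤ := by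
  classical
  have : Finite ι := Nat.finite_of_card_ne_zero (by simp [hι])
  have hpair (i j : ι) (hij : i ≠ j) : Pi.single i 1 ∈ U ∨ Pi.single j 1 ∈ U := by
    obtain ⟨s, hs, hiff⟩ := hsep i j hij
    by_cases hi : i ∈ s
    · exact single_one_mem_or_single_one_mem hι hone hs hi (hiff.1 hi)
    · exact (single_one_mem_or_single_one_mem hι hone hs (not_not.1 (mt hiff.2 hi)) hi).symm
  refine eq_top_of_forall_single_one_mem fun i => ?_
  by_contra hi
  exact hi (single_one_mem_of_forall_ne hone fun j hj => (hpair j i hj).resolve_right hi)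

end Indicator

section ImageLattice

variable {g : ℕ} {G : Subgroup (Equiv.Perm (Fin g × Bool))}

theorem indicator_mem_imageLattice {ρ : Equiv.Perm (Fin g × Bool)} (hρ : ρ ∈ G) :
    {i | (ρ (i, false)).2 = true}.indicator 1 ∈ imageLattice g G := by
  refine AddSubgroup.subset_closure ⟨ρ⁻¹, G.inv_mem hρ, funext fun i => ?_⟩
  have hiff : (∃ j, ρ⁻¹ (j, true) = (i, false)) ↔ (ρ (i, false)).2 = true := by
    simp_rw [Equiv.Perm.inv_eq_iff_eq]
    simp [Prod.ext_iff, @eq_comm _ true]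
  simp only [Set.indicator_apply, Set.mem_ofPred_eq, Pi.one_apply, hiff]

theorem one_mem_imageLattice (hδ : signFlip g ∈ G) : 1 ∈ imageLattice g G := by
  simpa [signFlip] using indicator_mem_imageLattice hδ

end ImageLattice

theorem imageLattice_eq_top_of_three_general
    (G : Subgroup (Equiv.Perm (Fin 3 × Bool)))
    (hδ : signFlip 3 ∈ G)
    (htrans : ∀ p q : Fin 3 × Bool, ∃ σ ∈ G, σ p = q)
    (hprim : ∀ τ ∈ G,
      (fun σ => σ * τ) '' {σ | σ ∈ G ∧ (σ ((0 : Fin 3), true)).2 = true}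
          = {σ | σ ∈ G ∧ (σ ((0 : Fin 3), true)).2 = true} →
      τ ((0 : Fin 3), true) = ((0 : Fin 3), true)) :
    imageLattice 3 G = ⊤ := by
  refine eq_top_of_forall_exists_separating_indicator (Nat.card_fin 3)
    (one_mem_imageLattice hδ) fun i j hij => ?_
  have hne : (i, false) ≠ (j, false) := fun h => hij (congrArg Prod.fst h)
  obtain ⟨ρ, hρ, hiff⟩ := exists_smul_mem_iff_smul_notMem
    (P := {p : Fin 3 × Bool | p.2 = true}) (htrans · (0, true)) hprim hne
  exact ⟨_, indicator_mem_imageLattice hρ, hiff⟩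

/-- Lemma 7.10: in the signed-permutation setup with `g = 3`, the lattice `U` generated by
the indicator vectors `1_{T(σ)}`, `σ ∈ G`, is all of `ℤ³`. -/
theorem imageLattice_eq_top_of_three
    (G : Subgroup (Equiv.Perm (Fin 3 × Bool)))
    (hsigned : ∀ σ ∈ G, ∀ p : Fin 3 × Bool, σ (p.1, !p.2) = ((σ p).1, !(σ p).2))
    (hδ : signFlip 3 ∈ G)
    (htrans : ∀ p q : Fin 3 × Bool, ∃ σ ∈ G, σ p = q)
    (hprim : ∀ τ ∈ G,
      (fun σ => σ * τ) '' {σ | σ ∈ G ∧ (σ ((0 : Fin 3), true)).2 = true}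
          = {σ | σ ∈ G ∧ (σ ((0 : Fin 3), true)).2 = true} →
      τ ((0 : Fin 3), true) = ((0 : Fin 3), true)) :
    imageLattice 3 G = ⊤ :=
  imageLattice_eq_top_of_three_general G hδ htrans hprim
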